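/- There exists exactly one function m : Stream' ℕ → Stream' ℕ → Stream' ℕ satisfying the corecursive equation m xs ys = SCons (head xs * head ys) ((m xs (tail ys)) ⊕ (m (tail xs) ys)) for all streams xs, ys, where ⊕ is pointwise addition; moreover this unique function is the binomial (shuffle) convolution: (m xs ys).get n = ∑_{k=0}^{n} (n.choose k) * xs.get k * ys.get (n − k) for all n. -/

import Mathlib

open Stream'

/-- Pointwise addition of streams. -/
def sadd (xs ys : Stream' ℕ) : Stream' ℕ := fun n => xs.get n + ys.get n

infixl:65 " ⊕ " => sadd

def shuf (xs ys : Stream' ℕ) : Stream' ℕ := fun n =>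
  ∑ k ∈ Finset.range (n + 1), n.choose k * xs.get k * ys.get (n - k)

theorem shuf_succ (xs ys : Stream' ℕ) (n : ℕ) :
    shuf xs ys (n + 1) = shuf xs ys.tail n + shuf xs.tail ys n := by
  have h := Finset.sum_choose_succ_mul (R := ℕ) (fun i j => xs.get i * ys.get j) n
  simp only [Nat.cast_id, ← mul_assoc] at h
  unfold shuf
  refine h.trans ?_
  congr 1
  refine Finset.sum_congr rfl fun k hk => ?_
  have hk' : k ≤ n := Nat.lt_succ_iff.mp (Finset.mem_range.mp hk)
  rw [Nat.succ_sub hk']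
  rfl

theorem shuf_eq (xs ys : Stream' ℕ) : shuf xs ys =
    Stream'.cons (xs.head * ys.head) (sadd (shuf xs ys.tail) (shuf xs.tail ys)) := by
  funext n
  cases n with
  | zero => simp [shuf]; rfl
  | succ n => exact shuf_succ xs ys n

theorem eq_shuf (m : Stream' ℕ → Stream' ℕ → Stream' ℕ)
    (hm : ∀ xs ys, m xs ys =
      Stream'.cons (xs.head * ys.head) (sadd (m xs ys.tail) (m xs.tail ys))) (n : ℕ) :
    ∀ xs ys, (m xs ys).get n = (shuf xs ys).get n := by
  induction n with
  | zero => intro xs ys; rw [hm, shuf_eq]; rfl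
  | succ n ih =>
    intro xs ys
    rw [hm, shuf_eq]
    exact congrArg₂ (· + ·) (ih _ _) (ih _ _)

theorem stmt_7 :
    (∃! m : Stream' ℕ → Stream' ℕ → Stream' ℕ,
      ∀ xs ys, m xs ys =
        Stream'.cons (xs.head * ys.head) ((m xs ys.tail) ⊕ (m xs.tail ys))) ∧
    (∀ m : Stream' ℕ → Stream' ℕ → Stream' ℕ,
      (∀ xs ys, m xs ys =
        Stream'.cons (xs.head * ys.head) ((m xs ys.tail) ⊕ (m xs.tail ys))) →
      ∀ xs ys n, (m xs ys).get n =
        ∑ k ∈ Finset.range (n + 1), n.choose k * xs.get k * ys.get (n - k)) := by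
  refine ⟨⟨shuf, shuf_eq, fun m hm => ?_⟩, fun m hm xs ys n => eq_shuf m hm n xs ys⟩
  funext xs ys n
  exact eq_shuf m hm n xs ys
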